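/- For every s-graphon μ and every k ∈ ℕ, the set C̃(μ,k) = {μ_M : M ∈ C(μ,k)} equals the intersection of the shape C(μ) with the set {μ_M : M ∈ M_k*}, where M_k* is the set of symmetric k-by-k matrices with non-negative entries whose entries sum to 1. -/

import Mathlib

open MeasureTheory Topology Filter

noncomputable section

/-- The unit square `[0,1]²`. -/
abbrev Sq : Type := unitInterval × unitInterval

/-- Convergence of a sequence of subsets in the Vietoris topology
(upper + lower Vietoris convergence). -/
def VietorisTendsto {X : Type*} [TopologicalSpace X] (A : ℕ → Set X) (B : Set X) : Prop :=
  (∀ U : Set X, IsOpen U → B ⊆ U → ∀ᶠ n in atTop, A n ⊆ U) ∧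
  (∀ U : Set X, IsOpen U → (B ∩ U).Nonempty → ∀ᶠ n in atTop, (A n ∩ U).Nonempty)

/-- A measure on the unit square is symmetric if it is invariant under the coordinate swap. -/
def IsSymmSq (μ : Measure Sq) : Prop := μ.map Prod.swap = μ

/-- s-graphons: symmetric Borel probability measures on the unit square,
with the weak topology. -/
def SGraphon : Type := {μ : ProbabilityMeasure Sq // IsSymmSq (μ : Measure Sq)}

instance : TopologicalSpace SGraphon :=
  inferInstanceAs (TopologicalSpace {μ : ProbabilityMeasure Sq // IsSymmSq (μ : Measure Sq)})

/-- The underlying measure of an s-graphon. -/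
def SGraphon.toMeasure (μ : SGraphon) : Measure Sq := (μ.1 : Measure Sq)

/-- A non-negative bounded Borel function on the unit square is fairly distributed
if all its horizontal and vertical sections integrate (w.r.t. Lebesgue measure) to 1. -/
structure FairlyDistributed (f : Sq → ℝ) : Prop where
  measurable : Measurable f
  nonneg : ∀ p, 0 ≤ f p
  bounded : ∃ C : ℝ, ∀ p, f p ≤ C
  row : ∀ x : unitInterval, ∫ v, f (x, v) = 1
  col : ∀ y : unitInterval, ∫ u, f (u, y) = 1

/-- The density `φ(f,μ)`. -/
def phiFn (f : Sq → ℝ) (μ : Measure Sq) (p : Sq) : ℝ :=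
  ∫ q, f (q.1, p.1) * f (q.2, p.2) ∂μ

/-- The measure `Φ(f,μ)`, with density `φ(f,μ)` w.r.t. 2-dimensional Lebesgue measure. -/
def PhiMeas (f : Sq → ℝ) (μ : Measure Sq) : Measure Sq :=
  volume.withDensity fun p => ENNReal.ofReal (phiFn f μ p)

/-- The shape of a measure `μ` on the unit square: the weak closure of the set of
(s-graphons corresponding to) the measures `Φ(f,μ)`, `f` continuous fairly distributed. -/
def shapeM (μ : Measure Sq) : Set SGraphon :=
  closure {ν : SGraphon | ∃ f : Sq → ℝ, FairlyDistributed f ∧ Continuous f ∧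
    ν.toMeasure = PhiMeas f μ}

/-- The shape `C(μ)` of an s-graphon. -/
def shape (μ : SGraphon) : Set SGraphon := shapeM μ.toMeasure

/-- A fractional partition into `k` parts: non-negative Borel functions on `[0,1]`
summing to the constant function 1, each integrating to `1/k`. -/
def IsFracPartition (k : ℕ) (f : Fin k → unitInterval → ℝ) : Prop :=
  (∀ i, Measurable (f i)) ∧ (∀ i x, 0 ≤ f i x) ∧ (∀ x, ∑ i, f i x = 1) ∧
    ∀ i, ∫ x, f i x = 1 / k

/-- The `k`-shape `C(μ,k)`: the closure in `ℝ^{k×k}` of the set of density matrices of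
fractional partitions into `k` parts. -/
def kShape (μ : Measure Sq) (k : ℕ) : Set (Matrix (Fin k) (Fin k) ℝ) :=
  closure {M | ∃ f : Fin k → unitInterval → ℝ, IsFracPartition k f ∧
    ∀ i j, M i j = ∫ p, f i p.1 * f j p.2 ∂μ}

/-- `M_k^*`: symmetric `k×k` matrices with non-negative entries summing to 1. -/
def Mstar (k : ℕ) : Set (Matrix (Fin k) (Fin k) ℝ) :=
  {M | M.IsSymm ∧ (∀ i j, 0 ≤ M i j) ∧ ∑ i, ∑ j, M i j = 1}

/-- The index `i` (0-based) with `u ∈ [i/k, (i+1)/k)` (and `i = k-1` for `u = 1`). -/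
def gridIdx (k : ℕ) (hk : 0 < k) (u : unitInterval) : Fin k :=
  ⟨min ⌊(u : ℝ) * k⌋₊ (k - 1), lt_of_le_of_lt (min_le_right _ _) (Nat.sub_lt hk one_pos)⟩

/-- The measure `μ_M` associated to a `k×k` matrix `M`: its density w.r.t. 2-dimensional
Lebesgue measure equals `k² M(i,j)` on the square `[i/k,(i+1)/k) × [j/k,(j+1)/k)` (0-based). -/
def muM {k : ℕ} (M : Matrix (Fin k) (Fin k) ℝ) : Measure Sq :=
  if hk : 0 < k then
    volume.withDensity fun p =>
      ENNReal.ofReal ((k : ℝ) ^ 2 * M (gridIdx k hk p.1) (gridIdx k hk p.2))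
  else 0

/-- `C̃(μ,k)`: the `k`-shape of `μ`, interpreted as a set of s-graphons. -/
def kShapeTilde (μ : Measure Sq) (k : ℕ) : Set SGraphon :=
  {ν : SGraphon | ∃ M ∈ kShape μ k, ν.toMeasure = muM M}

/-- The interval `I_i = [i/k, (i+1)/k)` (0-based), with `I_{k-1} = [(k-1)/k, 1]`,
as a subset of `[0,1]`. -/
def Ik (k : ℕ) (i : Fin k) : Set unitInterval :=
  if (i : ℕ) + 1 = k then Subtype.val ⁻¹' Set.Icc (((i : ℕ) : ℝ) / k) 1
  else Subtype.val ⁻¹' Set.Ico (((i : ℕ) : ℝ) / k) ((((i : ℕ) : ℝ) + 1) / k)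

lemma integ_bdd {α : Type*} [MeasurableSpace α] {m : Measure α} [IsFiniteMeasure m] {f : α → ℝ}
    (hf : Measurable f) (C : ℝ) (h : ∀ x, |f x| ≤ C) : Integrable f m :=
  Integrable.of_bound hf.aestronglyMeasurable C (Eventually.of_forall fun x => by
    simpa [Real.norm_eq_abs] using h x)

/-- The set of points with grid index `i`. -/
def Jset (k : ℕ) (hk : 0 < k) (i : Fin k) : Set unitInterval := {u | gridIdx k hk u = i}

lemma measurable_gridIdx (k : ℕ) (hk : 0 < k) : Measurable (gridIdx k hk) := by
  have h1 : Measurable fun u : unitInterval => ⌊(u : ℝ) * k⌋₊ :=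
    Nat.measurable_floor.comp (measurable_subtype_coe.mul_const _)
  have h2 : Measurable fun n : ℕ => (⟨min n (k - 1),
    lt_of_le_of_lt (min_le_right _ _) (Nat.sub_lt hk one_pos)⟩ : Fin k) := measurable_from_top
  exact h2.comp h1

lemma measurableSet_Jset (k : ℕ) (hk : 0 < k) (i : Fin k) : MeasurableSet (Jset k hk i) :=
  measurable_gridIdx k hk (measurableSet_singleton i)

lemma Jset_bounds (k : ℕ) (hk : 0 < k) (i : Fin k) (u : unitInterval) (hu : u ∈ Jset k hk i) :
    ((i : ℕ) : ℝ) / k ≤ u ∧ (u : ℝ) ≤ (((i : ℕ) : ℝ) + 1) / k := by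
  have hk' : (0 : ℝ) < k := by exact_mod_cast hk
  have h0 : 0 ≤ (u : ℝ) * k := mul_nonneg u.2.1 hk'.le
  have hi : min ⌊(u : ℝ) * k⌋₊ (k - 1) = (i : ℕ) := congrArg Fin.val hu
  rw [div_le_iff₀ hk', le_div_iff₀ hk']
  constructor
  · have : (i : ℕ) ≤ ⌊(u : ℝ) * k⌋₊ := by omega
    exact (Nat.le_floor_iff h0).1 this
  · rcases le_total ⌊(u : ℝ) * k⌋₊ (k - 1) with h | h
    · rw [min_eq_left h] at hi
      rw [← hi]
      exact (Nat.lt_floor_add_one _).le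
    · rw [min_eq_right h] at hi
      have : (i : ℕ) + 1 = k := by omega
      have h2 : ((i : ℕ) : ℝ) + 1 = k := by exact_mod_cast this
      rw [h2]
      nlinarith [u.2.2]

lemma Jset_of_bounds (k : ℕ) (hk : 0 < k) (i : Fin k) (u : unitInterval)
    (h1 : ((i : ℕ) : ℝ) / k < u) (h2 : (u : ℝ) < (((i : ℕ) : ℝ) + 1) / k) : u ∈ Jset k hk i := by
  have hk' : (0 : ℝ) < k := by exact_mod_cast hk
  rw [div_lt_iff₀ hk'] at h1
  rw [lt_div_iff₀ hk'] at h2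
  have h3 : ⌊(u : ℝ) * k⌋₊ = (i : ℕ) := by
    rw [Nat.floor_eq_iff (mul_nonneg u.2.1 hk'.le)]
    exact ⟨h1.le, h2⟩
  apply Fin.ext
  show min ⌊(u : ℝ) * k⌋₊ (k - 1) = (i : ℕ)
  rw [h3]
  have := i.2
  omega

lemma Jset_ends (k : ℕ) (hk : 0 < k) (i : Fin k) : ∃ a b : unitInterval,
    (b : ℝ) - a = 1 / k ∧ Set.Ioo a b ⊆ Jset k hk i ∧ Jset k hk i ⊆ Set.Icc a b := by
  have hk' : (0 : ℝ) < k := by exact_mod_cast hk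
  have h1 : ((i : ℕ) : ℝ) + 1 ≤ k := by exact_mod_cast i.2
  have h0 : (0 : ℝ) ≤ ((i : ℕ) : ℝ) := by positivity
  refine ⟨⟨((i : ℕ) : ℝ) / k, by positivity, by rw [div_le_one hk']; linarith⟩,
    ⟨(((i : ℕ) : ℝ) + 1) / k, by positivity, by rw [div_le_one hk']; linarith⟩, ?_, ?_, ?_⟩
  · simp only; ring
  · rintro u ⟨hu1, hu2⟩
    exact Jset_of_bounds k hk i u hu1 hu2
  · intro u hu
    exact Jset_bounds k hk i u hu

lemma volume_Jset (k : ℕ) (hk : 0 < k) (i : Fin k) :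
    volume (Jset k hk i) = ENNReal.ofReal (1 / k) := by
  obtain ⟨a, b, hab, h1, h2⟩ := Jset_ends k hk i
  apply le_antisymm
  · exact (measure_mono h2).trans (by rw [unitInterval.volume_Icc, hab])
  · rw [← hab, ← unitInterval.volume_Ioo]
    exact measure_mono h1

lemma volumeReal_Jset (k : ℕ) (hk : 0 < k) (i : Fin k) :
    (volume : Measure unitInterval).real (Jset k hk i) = 1 / k := by
  rw [Measure.real, volume_Jset, ENNReal.toReal_ofReal (by positivity)]

lemma frontier_Jset (k : ℕ) (hk : 0 < k) (i : Fin k) :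
    volume (frontier (Jset k hk i)) = 0 := by
  obtain ⟨a, b, hab, h1, h2⟩ := Jset_ends k hk i
  have : frontier (Jset k hk i) ⊆ {a, b} := by
    intro x hx
    have hx1 : x ∈ Set.Icc a b := closure_minimal h2 isClosed_Icc hx.1
    have hx2 : x ∉ Set.Ioo a b := fun h => hx.2 (interior_maximal h1 isOpen_Ioo h)
    by_contra hne
    simp only [Set.mem_insert_iff, Set.mem_singleton_iff, not_or] at hne
    exact hx2 ⟨lt_of_le_of_ne hx1.1 (Ne.symm hne.1), lt_of_le_of_ne hx1.2 hne.2⟩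
  exact measure_mono_null this ((Set.toFinite _).measure_zero _)

lemma frontier_Jset_prod (k : ℕ) (hk : 0 < k) (i j : Fin k) :
    (volume : Measure Sq) (frontier (Jset k hk i ×ˢ Jset k hk j)) = 0 := by
  rw [frontier_prod_eq, Measure.volume_eq_prod]
  apply measure_union_null
  · rw [Measure.prod_prod, frontier_Jset, mul_zero]
  · rw [Measure.prod_prod, frontier_Jset, zero_mul]

/-- The partition into indicator functions of the grid intervals. -/
def indP (k : ℕ) (hk : 0 < k) (i : Fin k) : unitInterval → ℝ :=
  (Jset k hk i).indicator fun _ => 1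

lemma indP_apply (k : ℕ) (hk : 0 < k) (i : Fin k) (u : unitInterval) :
    indP k hk i u = if gridIdx k hk u = i then 1 else 0 := by
  classical
  simp [indP, Set.indicator_apply, Jset]

lemma indP_frac (k : ℕ) (hk : 0 < k) : IsFracPartition k (indP k hk) := by
  refine ⟨fun i => measurable_const.indicator (measurableSet_Jset k hk i), fun i x => ?_,
    fun x => ?_, fun i => ?_⟩
  · rw [indP_apply]; split_ifs <;> norm_num
  · simp [indP_apply]
  · rw [indP, integral_indicator (measurableSet_Jset k hk i)]
    simp [← volumeReal_Jset k hk i]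

lemma IsFracPartition.le_one {k : ℕ} {f : Fin k → unitInterval → ℝ} (hf : IsFracPartition k f)
    (i : Fin k) (x : unitInterval) : f i x ≤ 1 := by
  rw [← hf.2.2.1 x]
  exact Finset.single_le_sum (f := fun i => f i x) (fun j _ => hf.2.1 j x) (Finset.mem_univ i)

lemma IsFracPartition.abs_le {k : ℕ} {f : Fin k → unitInterval → ℝ} (hf : IsFracPartition k f)
    (i : Fin k) (x : unitInterval) : |f i x| ≤ 1 := by
  rw [abs_of_nonneg (hf.2.1 i x)]; exact hf.le_one i x

lemma IsFracPartition.integrable {k : ℕ} {f : Fin k → unitInterval → ℝ}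
    (hf : IsFracPartition k f) (m : Measure unitInterval) [IsFiniteMeasure m] (i : Fin k) :
    Integrable (f i) m := integ_bdd (hf.1 i) 1 (hf.abs_le i)

lemma IsFracPartition.integrable_prod {k : ℕ} {f : Fin k → unitInterval → ℝ}
    (hf : IsFracPartition k f) (m : Measure Sq) [IsFiniteMeasure m] (i j : Fin k) :
    Integrable (fun p : Sq => f i p.1 * f j p.2) m := by
  refine integ_bdd (((hf.1 i).comp measurable_fst).mul ((hf.1 j).comp measurable_snd)) 1 ?_
  intro p
  rw [abs_mul]
  exact mul_le_one₀ (hf.abs_le i _) (abs_nonneg _) (hf.abs_le j _)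

lemma tendsto_prod (κ : Measure Sq) [IsFiniteMeasure κ] (φ : Sq → ℝ) (hφ : Measurable φ) (C : ℝ)
    (hC : ∀ p, |φ p| ≤ C) {k : ℕ} (c : ℕ → Fin k → unitInterval → ℝ) (f : Fin k → unitInterval → ℝ)
    (hc : ∀ n, IsFracPartition k (c n)) (hf : IsFracPartition k f) (i j : Fin k)
    (h1 : Tendsto (fun n => ∫ x, |c n i x - f i x| ∂κ.fst) atTop (𝓝 0))
    (h2 : Tendsto (fun n => ∫ x, |c n j x - f j x| ∂κ.snd) atTop (𝓝 0)) :
    Tendsto (fun n => ∫ p, φ p * (c n i p.1 * c n j p.2) ∂κ) atTop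
      (𝓝 (∫ p, φ p * (f i p.1 * f j p.2) ∂κ)) := by
  have hint : ∀ g : Fin k → unitInterval → ℝ, IsFracPartition k g →
      Integrable (fun p : Sq => φ p * (g i p.1 * g j p.2)) κ := fun g hg =>
    (hg.integrable_prod κ i j).bdd_mul (c := C) hφ.aestronglyMeasurable
      (Eventually.of_forall hC)
  have hm : ∀ n i, Measurable fun x => |c n i x - f i x| := fun n i =>
    ((hc n).1 i |>.sub (hf.1 i)).abs
  have hb : ∀ n i x, |c n i x - f i x| ≤ 1 := fun n i x => by
    rw [abs_le]; constructor <;> linarith [(hc n).2.1 i x, (hc n).le_one i x, hf.2.1 i x,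
      hf.le_one i x]
  have hI1 : ∀ n, Integrable (fun p : Sq => |c n i p.1 - f i p.1|) κ := fun n =>
    integ_bdd ((hm n i).comp measurable_fst) 1 fun p => by rw [abs_abs]; exact hb n i _
  have hI2 : ∀ n, Integrable (fun p : Sq => |c n j p.2 - f j p.2|) κ := fun n =>
    integ_bdd ((hm n j).comp measurable_snd) 1 fun p => by rw [abs_abs]; exact hb n j _
  rw [tendsto_iff_norm_sub_tendsto_zero]
  refine squeeze_zero (g := fun n => C * (∫ x, |c n i x - f i x| ∂κ.fst
    + ∫ x, |c n j x - f j x| ∂κ.snd)) (fun n => norm_nonneg _) (fun n => ?_) ?_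
  · rw [← integral_sub (hint _ (hc n)) (hint _ hf), Measure.fst, Measure.snd,
      integral_map measurable_fst.aemeasurable (hm n i).aestronglyMeasurable,
      integral_map measurable_snd.aemeasurable (hm n j).aestronglyMeasurable,
      ← integral_add (hI1 n) (hI2 n), ← integral_const_mul]
    refine norm_integral_le_of_norm_le (((hI1 n).add (hI2 n)).const_mul C)
      (Eventually.of_forall fun p => ?_)
    rw [Real.norm_eq_abs, ← mul_sub, abs_mul]
    refine mul_le_mul (hC p) ?_ (abs_nonneg _) ((abs_nonneg _).trans (hC p))
    have e : c n i p.1 * c n j p.2 - f i p.1 * f j p.2 =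
      (c n i p.1 - f i p.1) * c n j p.2 + f i p.1 * (c n j p.2 - f j p.2) := by ring
    rw [e]
    refine (abs_add_le _ _).trans (add_le_add ?_ ?_)
    · rw [abs_mul]; exact mul_le_of_le_one_right (abs_nonneg _) ((hc n).abs_le j _)
    · rw [abs_mul]; exact mul_le_of_le_one_left (abs_nonneg _) (hf.abs_le i _)
  · simpa using (h1.add h2).const_mul C

lemma int_mono_meas {m m' : Measure unitInterval} [IsFiniteMeasure m] (h : m' ≤ m)
    {g : unitInterval → ℝ} (hg : Integrable g m) :
    ∫ x, |g x| ∂m' ≤ ∫ x, |g x| ∂m :=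
  integral_mono_measure h (Eventually.of_forall fun _ => abs_nonneg _) hg.abs

lemma cont_integrable {m : Measure unitInterval} [IsFiniteMeasure m] {g : unitInterval → ℝ}
    (hg : Continuous g) : Integrable g m :=
  hg.integrable_of_hasCompactSupport (HasCompactSupport.of_compactSpace g)

lemma approx1 {k : ℕ} {f : Fin k → unitInterval → ℝ}
    (hf : IsFracPartition k f) (m : Measure unitInterval) [IsFiniteMeasure m] :
    ∃ g : ℕ → Fin k → unitInterval → ℝ, (∀ n i, Continuous (g n i)) ∧ (∀ n i x, 0 ≤ g n i x) ∧
      ∀ i, Tendsto (fun n => ∫ x, |g n i x - f i x| ∂m) atTop (𝓝 0) := by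
  have h := fun (n : ℕ) (i : Fin k) => (hf.integrable m i).exists_boundedContinuous_integral_sub_le
    (Nat.one_div_pos_of_nat (α := ℝ) (n := n))
  choose g hg hgi using h
  refine ⟨fun n i x => max (g n i x) 0, fun n i => (g n i).continuous.max continuous_const,
    fun n i x => le_max_right _ _, fun i => ?_⟩
  refine squeeze_zero (fun n => integral_nonneg fun x => abs_nonneg _) (fun n => ?_)
    tendsto_one_div_add_atTop_nhds_zero_nat
  refine (integral_mono ?_ ?_ fun x => ?_).trans (hg n i)
  · exact ((cont_integrable ((g n i).continuous.max continuous_const)).sub (hf.integrable m i)).abs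
  · exact ((hf.integrable m i).sub (hgi n i)).norm
  · simp only [Real.norm_eq_abs]
    have := hf.2.1 i x
    rw [abs_sub_comm (f i x)]
    rcases le_total (g n i x) 0 with h | h
    · rw [max_eq_right h, abs_of_nonpos (by linarith), abs_of_nonpos (by linarith)]; linarith
    · rw [max_eq_left h]

lemma approx2 {k : ℕ} (hk : 0 < k) {f : Fin k → unitInterval → ℝ}
    (hf : IsFracPartition k f) (m : Measure unitInterval) [IsFiniteMeasure m] :
    ∃ c : ℕ → Fin k → unitInterval → ℝ, (∀ n i, Continuous (c n i)) ∧ (∀ n i x, 0 ≤ c n i x) ∧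
      (∀ n x, ∑ i, c n i x = 1) ∧
      ∀ i, Tendsto (fun n => ∫ x, |c n i x - f i x| ∂m) atTop (𝓝 0) := by
  obtain ⟨g, hgc, hg0, hgt⟩ := approx1 hf m
  have hk' : (0 : ℝ) < k := by exact_mod_cast hk
  let s : ℕ → unitInterval → ℝ := fun n x => ∑ i, g n i x
  have hs0 : ∀ n x, 0 ≤ s n x := fun n x => Finset.sum_nonneg fun i _ => hg0 n i x
  have hsc : ∀ n, Continuous (s n) := fun n => continuous_finsetSum _ fun i _ => hgc n i
  have hM : ∀ n x, 0 < max (s n x) 1 := fun n x => lt_max_of_lt_right one_pos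
  have hcc : ∀ n i, Continuous fun x => g n i x / max (s n x) 1
      + (1 - s n x / max (s n x) 1) / k := fun n i =>
    ((hgc n i).div ((hsc n).max continuous_const) fun x => (hM n x).ne').add
      ((continuous_const.sub ((hsc n).div ((hsc n).max continuous_const)
        fun x => (hM n x).ne')).div_const _)
  refine ⟨fun n i x => g n i x / max (s n x) 1 + (1 - s n x / max (s n x) 1) / k, hcc, ?_, ?_, ?_⟩
  · intro n i x
    have : s n x / max (s n x) 1 ≤ 1 := (div_le_one (hM n x)).2 (le_max_left _ _)
    exact add_nonneg (div_nonneg (hg0 n i x) (hM n x).le) (div_nonneg (by linarith) hk'.le)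
  · intro n x
    rw [Finset.sum_add_distrib, ← Finset.sum_div, Finset.sum_const, Finset.card_univ,
      Fintype.card_fin, nsmul_eq_mul, mul_div_cancel₀ _ hk'.ne']
    simp [s]
  · intro i
    refine squeeze_zero (g := fun n => (∫ x, |g n i x - f i x| ∂m)
      + ∑ j, ∫ x, |g n j x - f j x| ∂m)
      (fun n => integral_nonneg fun x => abs_nonneg _) (fun n => ?_) ?_
    · have hI : ∀ j, Integrable (fun x => |g n j x - f j x|) m := fun j =>
        ((cont_integrable (hgc n j)).sub (hf.integrable m j)).abs
      rw [← integral_finsetSum _ (fun j _ => hI j),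
        ← integral_add (hI i) (integrable_finsetSum _ fun j _ => hI j)]
      refine integral_mono ?_ ?_ fun x => ?_
      · exact ((cont_integrable (hcc n i)).sub (hf.integrable m i)).abs
      · exact (hI i).add (integrable_finsetSum _ fun j _ => hI j)
      · have key : |g n i x / max (s n x) 1 + (1 - s n x / max (s n x) 1) / k - g n i x|
            ≤ |s n x - 1| := by
          have hgs : g n i x ≤ s n x :=
            Finset.single_le_sum (f := fun i => g n i x) (fun j _ => hg0 n j x)
              (Finset.mem_univ i)
          rcases le_total (s n x) 1 with h | h
          · rw [max_eq_right h, abs_of_nonpos (a := s n x - 1) (by linarith)]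
            have : (1 - s n x) / k ≤ 1 - s n x :=
              div_le_self (by linarith) (by exact_mod_cast hk)
            have h2 : 0 ≤ (1 - s n x) / k := div_nonneg (by linarith) hk'.le
            rw [div_one, div_one, add_sub_cancel_left, abs_of_nonneg h2]
            linarith
          · have hs : 0 < s n x := by linarith
            rw [max_eq_left h, abs_of_nonneg (a := s n x - 1) (by linarith), div_self hs.ne',
              sub_self, zero_div, add_zero]
            have h1 : g n i x / s n x ≤ g n i x := div_le_self (hg0 n i x) h
            rw [abs_of_nonpos (by linarith)]
            have h2 : g n i x / s n x * s n x = g n i x := div_mul_cancel₀ _ hs.ne'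
            have h3 : g n i x / s n x ≤ 1 := (div_le_one hs).2 hgs
            nlinarith
        have key2 : |s n x - 1| ≤ ∑ j, |g n j x - f j x| := by
          have : s n x - 1 = ∑ j, (g n j x - f j x) := by
            rw [Finset.sum_sub_distrib, hf.2.2.1]
          rw [this]
          exact Finset.abs_sum_le_sum_abs _ _
        have := abs_sub_le (g n i x / max (s n x) 1 + (1 - s n x / max (s n x) 1) / k) (g n i x)
          (f i x)
        show _ ≤ |g n i x - f i x| + ∑ j, |g n j x - f j x|
        show |g n i x / max (s n x) 1 + (1 - s n x / max (s n x) 1) / k - f i x| ≤ _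
        linarith
    · simpa using (hgt i).add (tendsto_finsetSum Finset.univ fun j _ => hgt j)

lemma approx3 {k : ℕ} (hk : 0 < k) {f : Fin k → unitInterval → ℝ}
    (hf : IsFracPartition k f) (m : Measure unitInterval) [IsFiniteMeasure m] (hm : volume ≤ m) :
    ∃ c : ℕ → Fin k → unitInterval → ℝ, (∀ n, IsFracPartition k (c n)) ∧
      (∀ n i, Continuous (c n i)) ∧
      ∀ i, ∀ m' ≤ m, Tendsto (fun n => ∫ x, |c n i x - f i x| ∂m') atTop (𝓝 0) := by
  obtain ⟨c, hcc, hc0, hc1, hct⟩ := approx2 hk hf m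
  have hk' : (0 : ℝ) < k := by exact_mod_cast hk
  have hcle : ∀ n i x, c n i x ≤ 1 := fun n i x => by
    rw [← hc1 n x]
    exact Finset.single_le_sum (f := fun i => c n i x) (fun j _ => hc0 n j x) (Finset.mem_univ i)
  let a : ℕ → Fin k → ℝ := fun n i => ∫ x, c n i x
  let η : ℕ → ℝ := fun n => ∑ i, |a n i - 1 / k|
  let t : ℕ → ℝ := fun n => 1 / (1 + k * η n)
  have ha : ∀ i, Tendsto (fun n => a n i) atTop (𝓝 (1 / k)) := by
    intro i
    rw [tendsto_iff_norm_sub_tendsto_zero]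
    refine squeeze_zero (fun n => norm_nonneg _) (fun n => ?_) (hct i)
    have hI := (cont_integrable (m := volume) (hcc n i)).sub (hf.integrable volume i)
    rw [← hf.2.2.2 i, ← integral_sub (cont_integrable (hcc n i)) (hf.integrable volume i)]
    refine (norm_integral_le_integral_norm _).trans ?_
    exact int_mono_meas hm ((cont_integrable (hcc n i)).sub (hf.integrable m i))
  have hη : Tendsto η atTop (𝓝 0) := by
    have := tendsto_finsetSum (Finset.univ : Finset (Fin k)) fun i _ =>
      ((ha i).sub_const (1 / (k : ℝ))).abs
    simpa [η] using this
  have hη0 : ∀ n, 0 ≤ η n := fun n => Finset.sum_nonneg fun i _ => abs_nonneg _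
  have ht : Tendsto t atTop (𝓝 1) := by
    have h := (hη.const_mul (k : ℝ)).const_add 1
    have := (tendsto_const_nhds (x := (1 : ℝ))).div h (by simp)
    simpa [t, Pi.div_def] using this
  have hpos : ∀ n, 0 < 1 + k * η n := fun n => by have := hη0 n; positivity
  have ht0 : ∀ n, 0 < t n := fun n => one_div_pos.2 (hpos n)
  have ht1 : ∀ n, t n ≤ 1 := fun n => by
    have := mul_nonneg hk'.le (hη0 n)
    exact (div_le_one (hpos n)).2 (by linarith)
  have hta : ∀ n i, t n * a n i ≤ 1 / k := by
    intro n i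
    have h1 : |a n i - 1 / k| ≤ η n :=
      Finset.single_le_sum (f := fun i => |a n i - 1 / k|) (fun j _ => abs_nonneg _)
        (Finset.mem_univ i)
    have h2 : a n i ≤ 1 / k + η n := by linarith [le_abs_self (a n i - 1 / k)]
    have h3 : 1 / k + η n = (1 + k * η n) / k := by field_simp
    calc t n * a n i ≤ t n * ((1 + k * η n) / k) := by
          rw [← h3]; exact mul_le_mul_of_nonneg_left h2 (ht0 n).le
      _ = 1 / k := by
          have := (hpos n).ne'
          simp only [t]; field_simp
  have hdc : ∀ n i, Continuous fun x => t n * (c n i x - a n i) + 1 / k := fun n i =>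
    (((hcc n i).sub continuous_const).const_mul _).add continuous_const
  have hfrac : ∀ n, IsFracPartition k fun i x => t n * (c n i x - a n i) + 1 / k := by
    intro n
    refine ⟨fun i => (hdc n i).measurable, fun i x => ?_, fun x => ?_, fun i => ?_⟩
    · have := mul_nonneg (ht0 n).le (hc0 n i x)
      have := hta n i
      linarith
    · have hsa : ∑ i, a n i = 1 := by
        rw [← integral_finsetSum _ fun i _ => cont_integrable (hcc n i)]
        simp [hc1 n]
      rw [Finset.sum_add_distrib, ← Finset.mul_sum, Finset.sum_sub_distrib, hc1, hsa]
      simp [hk'.ne']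
    · have hI : Integrable (c n i) volume := cont_integrable (hcc n i)
      show ∫ x, (t n * (c n i x - a n i) + 1 / k) = 1 / k
      rw [integral_add (f := fun x => t n * (c n i x - a n i)) ((hI.sub (integrable_const _)).const_mul _) (integrable_const _),
        integral_const_mul, integral_sub hI (integrable_const _)]
      simp [a]
  refine ⟨_, hfrac, hdc, fun i m' hm' => ?_⟩
  refine squeeze_zero (g := fun n => (∫ x, |c n i x - f i x| ∂m)
      + m.real Set.univ * ((1 - t n) + |1 / k - t n * a n i|))
      (fun n => integral_nonneg fun x => abs_nonneg _) (fun n => ?_) ?_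
  · refine (int_mono_meas hm' (((hfrac n).integrable m i).sub (hf.integrable m i))).trans ?_
    have hI : Integrable (fun x => |c n i x - f i x|) m :=
      ((cont_integrable (hcc n i)).sub (hf.integrable m i)).abs
    rw [← smul_eq_mul (m.real Set.univ), ← integral_const (μ := m),
      ← integral_add hI (integrable_const _)]
    refine integral_mono (((hfrac n).integrable m i).sub (hf.integrable m i)).abs
      (hI.add (integrable_const _)) fun x => ?_
    show |t n * (c n i x - a n i) + 1 / k - f i x| ≤ |c n i x - f i x| +
      ((1 - t n) + |1 / k - t n * a n i|)
    have e : t n * (c n i x - a n i) + 1 / k - f i x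
      = (c n i x - f i x) + (-((1 - t n) * c n i x) + (1 / k - t n * a n i)) := by ring
    rw [e]
    refine (abs_add_le _ _).trans (add_le_add le_rfl ((abs_add_le _ _).trans
      (add_le_add ?_ le_rfl)))
    rw [abs_neg, abs_of_nonneg (mul_nonneg (by linarith [ht1 n]) (hc0 n i x))]
    exact mul_le_of_le_one_right (by linarith [ht1 n]) (hcle n i x)
  · have h1 : Tendsto (fun n => (1 - t n) + |1 / (k : ℝ) - t n * a n i|) atTop
        (𝓝 ((1 - 1 : ℝ) + |1 / (k : ℝ) - 1 * (1 / (k : ℝ))|)) :=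
      (ht.const_sub 1).add ((ht.mul (ha i)).const_sub _).abs
    simpa using (hct i).add (h1.const_mul (m.real Set.univ))

/-- The density attached to a matrix and a fractional partition. -/
def densW {k : ℕ} (M : Matrix (Fin k) (Fin k) ℝ) (p : Fin k → unitInterval → ℝ) (q : Sq) : ℝ :=
  (k : ℝ) ^ 2 * ∑ i, ∑ j, M i j * (p i q.1 * p j q.2)

/-- The measure attached to a matrix and a fractional partition. -/
def measW {k : ℕ} (M : Matrix (Fin k) (Fin k) ℝ) (p : Fin k → unitInterval → ℝ) : Measure Sq :=
  volume.withDensity fun q => ENNReal.ofReal (densW M p q)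

lemma muM_eq_measW {k : ℕ} (hk : 0 < k) (M : Matrix (Fin k) (Fin k) ℝ) :
    muM M = measW M (indP k hk) := by
  rw [muM, dif_pos hk, measW]
  congr 1
  funext q
  congr 1
  rw [densW]
  congr 1
  simp [indP_apply]

lemma densW_nonneg {k : ℕ} {M : Matrix (Fin k) (Fin k) ℝ} {p : Fin k → unitInterval → ℝ}
    (hM : M ∈ Mstar k) (hp : IsFracPartition k p) (q : Sq) : 0 ≤ densW M p q :=
  mul_nonneg (by positivity) (Finset.sum_nonneg fun i _ => Finset.sum_nonneg fun j _ =>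
    mul_nonneg (hM.2.1 i j) (mul_nonneg (hp.2.1 i _) (hp.2.1 j _)))

lemma densW_measurable {k : ℕ} (M : Matrix (Fin k) (Fin k) ℝ) {p : Fin k → unitInterval → ℝ}
    (hp : IsFracPartition k p) : Measurable (densW M p) :=
  (Finset.measurable_sum _ fun i _ => Finset.measurable_sum _ fun j _ =>
    (((hp.1 i).comp measurable_fst).mul ((hp.1 j).comp measurable_snd)).const_mul _).const_mul _

lemma densW_swap {k : ℕ} {M : Matrix (Fin k) (Fin k) ℝ} {p : Fin k → unitInterval → ℝ}
    (hM : M ∈ Mstar k) (q : Sq) : densW M p q.swap = densW M p q := by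
  simp only [densW, Prod.fst_swap, Prod.snd_swap]
  rw [Finset.sum_comm]
  congr 1
  refine Finset.sum_congr rfl fun i _ => Finset.sum_congr rfl fun j _ => ?_
  rw [hM.1.apply i j]
  ring

lemma integral_measW {k : ℕ} {M : Matrix (Fin k) (Fin k) ℝ} {p : Fin k → unitInterval → ℝ}
    (hM : M ∈ Mstar k) (hp : IsFracPartition k p) (φ : Sq → ℝ) (hφ : Measurable φ) (C : ℝ)
    (hC : ∀ q, |φ q| ≤ C) : ∫ q, φ q ∂(measW M p) =
      (k : ℝ) ^ 2 * ∑ i, ∑ j, M i j * ∫ q, φ q * (p i q.1 * p j q.2) := by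
  rw [measW, integral_withDensity_eq_integral_toReal_smul
    (densW_measurable M hp).ennreal_ofReal (Eventually.of_forall fun _ => ENNReal.ofReal_lt_top)]
  have hI : ∀ i j, Integrable (fun q : Sq => φ q * (p i q.1 * p j q.2)) volume := fun i j =>
    (hp.integrable_prod volume i j).bdd_mul (c := C) hφ.aestronglyMeasurable
      (Eventually.of_forall hC)
  have e : ∀ q, (ENNReal.ofReal (densW M p q)).toReal • φ q =
      (k : ℝ) ^ 2 * ∑ i, ∑ j, M i j * (φ q * (p i q.1 * p j q.2)) := by
    intro q
    rw [ENNReal.toReal_ofReal (densW_nonneg hM hp q), smul_eq_mul, densW, mul_assoc,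
      Finset.sum_mul]
    congr 1
    refine Finset.sum_congr rfl fun i _ => ?_
    rw [Finset.sum_mul]
    refine Finset.sum_congr rfl fun j _ => ?_
    ring
  simp only [e]
  rw [integral_const_mul]
  congr 1
  have key : ∀ N : Fin k → Fin k → ℝ, ∫ q : Sq, ∑ i, ∑ j, N i j * (φ q * (p i q.1 * p j q.2)) =
      ∑ i, ∑ j, N i j * ∫ q : Sq, φ q * (p i q.1 * p j q.2) := by
    intro N
    rw [integral_finsetSum _ fun i _ => integrable_finsetSum _ fun j _ => (hI i j).const_mul _]
    refine Finset.sum_congr rfl fun i _ => ?_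
    rw [integral_finsetSum _ fun j _ => (hI i j).const_mul _]
    refine Finset.sum_congr rfl fun j _ => ?_
    rw [integral_const_mul]
  exact key fun i j => M i j

lemma measW_prob {k : ℕ} (hk : 0 < k) {M : Matrix (Fin k) (Fin k) ℝ}
    {p : Fin k → unitInterval → ℝ}
    (hM : M ∈ Mstar k) (hp : IsFracPartition k p) : IsProbabilityMeasure (measW M p) := by
  have hk' : (0 : ℝ) < k := by exact_mod_cast hk
  have h := integral_measW hM hp (fun _ => 1) measurable_const 1 (by simp)
  have h2 : ∀ i j, ∫ q : Sq, (1 : ℝ) * (p i q.1 * p j q.2) = 1 / k * (1 / k) := by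
    intro i j
    simp only [one_mul]
    rw [Measure.volume_eq_prod, integral_prod_mul (p i) (p j), hp.2.2.2, hp.2.2.2, one_div]
  simp only [h2] at h
  simp only [← Finset.sum_mul, hM.2.2, one_mul] at h
  have h3 : (measW M p).real Set.univ = 1 := by
    rw [integral_const, smul_eq_mul, mul_one] at h
    rw [h]; field_simp
  refine ⟨?_⟩
  rw [Measure.real, ENNReal.toReal_eq_one_iff] at h3
  exact h3

lemma measW_symm {k : ℕ} {M : Matrix (Fin k) (Fin k) ℝ} {p : Fin k → unitInterval → ℝ}
    (hM : M ∈ Mstar k) (hp : IsFracPartition k p) : IsSymmSq (measW M p) := by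
  have hmp : MeasurePreserving (Prod.swap : Sq → Sq) volume volume := by
    rw [Measure.volume_eq_prod]; exact Measure.measurePreserving_swap
  refine Measure.ext fun s hs => ?_
  rw [Measure.map_apply measurable_swap hs, measW, withDensity_apply _ (measurable_swap hs),
    withDensity_apply _ hs, ← hmp.setLIntegral_comp_preimage hs
      (densW_measurable M hp).ennreal_ofReal]
  simp only [densW_swap hM]

/-- The density matrix of a fractional partition. -/
def matM {k : ℕ} (μ : Measure Sq) (c : Fin k → unitInterval → ℝ) : Matrix (Fin k) (Fin k) ℝ :=
  fun i j => ∫ p, c i p.1 * c j p.2 ∂μ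

lemma matM_mem {k : ℕ} (μ : SGraphon) {c : Fin k → unitInterval → ℝ} (hc : IsFracPartition k c) :
    matM μ.toMeasure c ∈ Mstar k := by
  have : IsProbabilityMeasure μ.toMeasure := μ.1.2
  refine ⟨?_, fun i j => integral_nonneg fun p => mul_nonneg (hc.2.1 i _) (hc.2.1 j _), ?_⟩
  · ext i j
    show ∫ p, c j p.1 * c i p.2 ∂μ.toMeasure = ∫ p, c i p.1 * c j p.2 ∂μ.toMeasure
    have h : μ.toMeasure.map Prod.swap = μ.toMeasure := μ.2
    conv_lhs => rw [← h]
    rw [integral_map (f := fun p : Sq => c j p.1 * c i p.2) measurable_swap.aemeasurable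
      (((hc.1 j).comp measurable_fst).mul ((hc.1 i).comp measurable_snd)).aestronglyMeasurable]
    simp only [Prod.fst_swap, Prod.snd_swap, mul_comm]
  · simp only [matM]
    have hI := hc.integrable_prod μ.toMeasure
    simp only [← integral_finsetSum _ fun j _ => hI _ j]
    rw [← integral_finsetSum _ fun i _ => integrable_finsetSum _ fun j _ => hI i j]
    simp only [← Finset.mul_sum, hc.2.2.1, mul_one]
    simp

lemma isClosed_Mstar (k : ℕ) : IsClosed (Mstar k) := by
  have h1 : IsClosed {M : Matrix (Fin k) (Fin k) ℝ | M.IsSymm} :=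
    isClosed_eq continuous_id.matrix_transpose continuous_id
  have h2 : IsClosed {M : Matrix (Fin k) (Fin k) ℝ | ∀ i j, 0 ≤ M i j} := by
    simp only [Set.ofPred_forall]
    exact isClosed_iInter fun i => isClosed_iInter fun j =>
      isClosed_le continuous_const (continuous_id.matrix_elem i j)
  have h3 : IsClosed {M : Matrix (Fin k) (Fin k) ℝ | ∑ i, ∑ j, M i j = 1} :=
    isClosed_eq (continuous_finsetSum _ fun i _ => continuous_finsetSum _ fun j _ =>
      continuous_id.matrix_elem i j) continuous_const
  exact h1.inter (h2.inter h3)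

/-- The fairly distributed function built from two fractional partitions. -/
def hFn {k : ℕ} (c p : Fin k → unitInterval → ℝ) (q : Sq) : ℝ := (k : ℝ) * ∑ i, c i q.1 * p i q.2

lemma hFn_continuous {k : ℕ} {c p : Fin k → unitInterval → ℝ} (hc : ∀ i, Continuous (c i))
    (hp : ∀ i, Continuous (p i)) : Continuous (hFn c p) :=
  (continuous_finsetSum _ fun i _ =>
    ((hc i).comp continuous_fst).mul ((hp i).comp continuous_snd)).const_mul _

lemma hFn_fair {k : ℕ} (hk : 0 < k) {c p : Fin k → unitInterval → ℝ} (hc : IsFracPartition k c)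
    (hp : IsFracPartition k p) : FairlyDistributed (hFn c p) := by
  have hk' : (0 : ℝ) < k := by exact_mod_cast hk
  refine ⟨?_, fun q => ?_, ⟨k * k, fun q => ?_⟩, fun x => ?_, fun y => ?_⟩
  · exact (Finset.measurable_sum _ fun i _ =>
      ((hc.1 i).comp measurable_fst).mul ((hp.1 i).comp measurable_snd)).const_mul _
  · exact mul_nonneg hk'.le (Finset.sum_nonneg fun i _ => mul_nonneg (hc.2.1 i _) (hp.2.1 i _))
  · refine mul_le_mul_of_nonneg_left ?_ hk'.le
    calc ∑ i, c i q.1 * p i q.2 ≤ ∑ _i : Fin k, (1 : ℝ) := Finset.sum_le_sum fun i _ =>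
          mul_le_one₀ (hc.le_one i _) (hp.2.1 i _) (hp.le_one i _)
      _ = k := by simp
  · simp only [hFn]
    rw [integral_const_mul, integral_finsetSum _ fun i _ => (hp.integrable volume i).const_mul _]
    simp only [integral_const_mul, hp.2.2.2, ← Finset.sum_mul, hc.2.2.1]
    field_simp
  · simp only [hFn]
    rw [integral_const_mul, integral_finsetSum _ fun i _ => (hc.integrable volume i).mul_const _]
    simp only [integral_mul_const, hc.2.2.2, ← Finset.mul_sum, hp.2.2.1]
    field_simp

lemma PhiMeas_hFn {k : ℕ} {c p : Fin k → unitInterval → ℝ} (hc : IsFracPartition k c)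
    (μ : Measure Sq) [IsFiniteMeasure μ] :
    PhiMeas (hFn c p) μ = measW (matM μ c) p := by
  rw [PhiMeas, measW]
  congr 1
  funext u
  congr 1
  rw [phiFn, densW]
  have e : ∀ q : Sq, hFn c p (q.1, u.1) * hFn c p (q.2, u.2) =
      (k : ℝ) ^ 2 * ∑ i, ∑ j, (c i q.1 * c j q.2) * (p i u.1 * p j u.2) := by
    intro q
    simp only [hFn]
    rw [mul_mul_mul_comm, Finset.sum_mul_sum, pow_two]
    congr 1
    refine Finset.sum_congr rfl fun i _ => Finset.sum_congr rfl fun j _ => ?_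
    ring
  simp only [e]
  have hI := hc.integrable_prod μ
  rw [integral_const_mul, integral_finsetSum _ fun i _ => integrable_finsetSum _ fun j _ =>
    (hI i j).mul_const _]
  congr 1
  refine Finset.sum_congr rfl fun i _ => ?_
  rw [integral_finsetSum _ fun j _ => (hI i j).mul_const _]
  refine Finset.sum_congr rfl fun j _ => ?_
  rw [integral_mul_const]
  rfl

lemma matM_mem_closure {k : ℕ} (hk : 0 < k) (μ : Measure Sq) [IsFiniteMeasure μ]
    {f : Fin k → unitInterval → ℝ} (hf : IsFracPartition k f) :
    matM μ f ∈ closure {M | ∃ c : Fin k → unitInterval → ℝ, IsFracPartition k c ∧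
      (∀ i, Continuous (c i)) ∧ M = matM μ c} := by
  obtain ⟨c, hc, hcc, hct⟩ := approx3 hk hf (volume + (μ.fst + μ.snd))
    (Measure.le_add_right le_rfl)
  refine mem_closure_of_tendsto (f := fun n => matM μ (c n)) (b := atTop) ?_
    (Eventually.of_forall fun n => ⟨c n, hc n, hcc n, rfl⟩)
  refine tendsto_pi_nhds.2 fun i => tendsto_pi_nhds.2 fun j => ?_
  have h1 : μ.fst ≤ volume + (μ.fst + μ.snd) :=
    Measure.le_add_left (Measure.le_add_right le_rfl)
  have h2 : μ.snd ≤ volume + (μ.fst + μ.snd) :=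
    Measure.le_add_left (Measure.le_add_left le_rfl)
  have := tendsto_prod μ (fun _ => 1) measurable_const 1 (by simp) c f hc hf i j
    (hct i _ h1) (hct j _ h2)
  simp only [one_mul] at this
  exact this

lemma fst_vol : (volume : Measure Sq).fst = volume := by
  rw [Measure.volume_eq_prod]; exact Measure.fst_prod

lemma snd_vol : (volume : Measure Sq).snd = volume := by
  rw [Measure.volume_eq_prod]; exact Measure.snd_prod

lemma kShape_sub {k : ℕ} (μ : SGraphon) {M : Matrix (Fin k) (Fin k) ℝ}
    (hM : M ∈ kShape μ.toMeasure k) : M ∈ Mstar k := by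
  refine closure_minimal ?_ (isClosed_Mstar k) hM
  rintro N ⟨f, hf, hN⟩
  have : N = matM μ.toMeasure f := by ext i j; exact hN i j
  rw [this]
  exact matM_mem μ hf

lemma kShape_shape {k : ℕ} (hk : 0 < k) (μ ν : SGraphon) {M : Matrix (Fin k) (Fin k) ℝ}
    (hM : M ∈ kShape μ.toMeasure k) (hν : ν.toMeasure = muM M) : ν ∈ shape μ := by
  have hprob : IsProbabilityMeasure μ.toMeasure := μ.1.2
  have hMs := kShape_sub μ hM
  have hM2 : M ∈ closure {M | ∃ c : Fin k → unitInterval → ℝ, IsFracPartition k c ∧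
      (∀ i, Continuous (c i)) ∧ M = matM μ.toMeasure c} := by
    refine closure_minimal ?_ isClosed_closure hM
    rintro N ⟨f, hf, hN⟩
    have : N = matM μ.toMeasure f := by ext i j; exact hN i j
    rw [this]
    exact matM_mem_closure hk _ hf
  have hfc : FrechetUrysohnSpace (Matrix (Fin k) (Fin k) ℝ) :=
    inferInstanceAs (FrechetUrysohnSpace (Fin k → Fin k → ℝ))
  obtain ⟨N, hN, hNt⟩ := mem_closure_iff_seq_limit.1 hM2
  choose c hc hcc hNc using hN
  obtain ⟨p, hp, hpc, hpt⟩ := approx3 hk (indP_frac k hk) volume le_rfl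
  have hNs : ∀ n, N n ∈ Mstar k := fun n => by rw [hNc]; exact matM_mem μ (hc n)
  let νs : ℕ → SGraphon := fun n =>
    ⟨⟨measW (N n) (p n), measW_prob hk (hNs n) (hp n)⟩, measW_symm (hNs n) (hp n)⟩
  refine mem_closure_of_tendsto (f := νs) (b := atTop) ?_ (Eventually.of_forall fun n =>
    ⟨hFn (c n) (p n), hFn_fair hk (hc n) (hp n), hFn_continuous (hcc n) (hpc n), ?_⟩)
  · refine tendsto_subtype_rng.2 ?_
    rw [ProbabilityMeasure.tendsto_iff_forall_integral_tendsto]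
    intro φ
    have hφ : Measurable φ := φ.continuous.measurable
    have hφC : ∀ q, |φ q| ≤ ‖φ‖ := fun q => φ.norm_coe_le_norm q
    have e1 : ∀ n, ∫ q, φ q ∂((νs n).1 : Measure Sq) = (k : ℝ) ^ 2 *
        ∑ i, ∑ j, N n i j * ∫ q, φ q * (p n i q.1 * p n j q.2) := fun n =>
      integral_measW (hNs n) (hp n) φ hφ _ hφC
    have e2 : ∫ q, φ q ∂(ν.1 : Measure Sq) = (k : ℝ) ^ 2 *
        ∑ i, ∑ j, M i j * ∫ q, φ q * (indP k hk i q.1 * indP k hk j q.2) := by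
      have h := integral_measW hMs (indP_frac k hk) φ hφ _ hφC
      rw [← muM_eq_measW, ← hν] at h
      exact h
    rw [e2]
    simp only [e1]
    refine Tendsto.const_mul _ (tendsto_finsetSum _ fun i _ => tendsto_finsetSum _ fun j _ => ?_)
    refine Tendsto.mul ?_ ?_
    · exact (tendsto_pi_nhds.1 ((tendsto_pi_nhds.1 hNt) i)) j
    · refine tendsto_prod volume φ hφ _ hφC p (indP k hk) hp (indP_frac k hk) i j ?_ ?_
      · rw [fst_vol]; exact hpt i _ le_rfl
      · rw [snd_vol]; exact hpt j _ le_rfl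
  · rw [PhiMeas_hFn (hc n), ← hNc n]
    rfl

lemma integral_indP_prod {k : ℕ} (hk : 0 < k) (m : Measure Sq) (i j : Fin k) :
    ∫ q, indP k hk i q.1 * indP k hk j q.2 ∂m = m.real (Jset k hk i ×ˢ Jset k hk j) := by
  rw [← integral_indicator_one ((measurableSet_Jset k hk i).prod (measurableSet_Jset k hk j))]
  congr 1
  funext q
  exact (Set.indicator_prod_one (M₀ := ℝ)).symm

lemma integral_indP_mul {k : ℕ} (hk : 0 < k) (i a : Fin k) :
    ∫ u, indP k hk i u * indP k hk a u = if a = i then 1 / (k : ℝ) else 0 := by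
  have : ∀ u, indP k hk i u * indP k hk a u = if a = i then indP k hk i u else 0 := by
    intro u
    simp only [indP_apply]
    split_ifs <;> simp_all
  simp only [this]
  split_ifs
  · exact (indP_frac k hk).2.2.2 i
  · simp

lemma muM_Jset {k : ℕ} (hk : 0 < k) {M : Matrix (Fin k) (Fin k) ℝ} (hM : M ∈ Mstar k)
    (i j : Fin k) : (muM M).real (Jset k hk i ×ˢ Jset k hk j) = M i j := by
  have hk' : (0 : ℝ) < k := by exact_mod_cast hk
  have hp := indP_frac k hk
  rw [← integral_indP_prod, muM_eq_measW hk, integral_measW hM hp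
    (fun q => indP k hk i q.1 * indP k hk j q.2)
    (((hp.1 i).comp measurable_fst).mul ((hp.1 j).comp measurable_snd)) 1 (fun q => by
      rw [abs_mul]; exact mul_le_one₀ (hp.abs_le i _) (abs_nonneg _) (hp.abs_le j _))]
  have e : ∀ a b, ∫ q : Sq, indP k hk i q.1 * indP k hk j q.2 *
      (indP k hk a q.1 * indP k hk b q.2) =
      (if a = i then 1 / (k : ℝ) else 0) * (if b = j then 1 / (k : ℝ) else 0) := by
    intro a b
    have e0 : ∀ q : Sq, indP k hk i q.1 * indP k hk j q.2 * (indP k hk a q.1 * indP k hk b q.2) =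
      (indP k hk i q.1 * indP k hk a q.1) * (indP k hk j q.2 * indP k hk b q.2) := fun q => by ring
    simp only [e0]
    rw [Measure.volume_eq_prod, integral_prod_mul (fun u => indP k hk i u * indP k hk a u)
      (fun u => indP k hk j u * indP k hk b u), integral_indP_mul, integral_indP_mul]
  simp only [e]
  simp
  field_simp

/-- Averaging a fairly distributed function over the grid intervals. -/
def avgF (k : ℕ) (hk : 0 < k) (f : Sq → ℝ) (i : Fin k) (x : unitInterval) : ℝ :=
  ∫ v, indP k hk i v * f (x, v)

lemma avgF_frac {k : ℕ} (hk : 0 < k) {f : Sq → ℝ} (hf : FairlyDistributed f) :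
    IsFracPartition k (avgF k hk f) := by
  have hp := indP_frac k hk
  obtain ⟨C, hC⟩ := hf.bounded
  have hm : ∀ i, Measurable fun q : Sq => indP k hk i q.2 * f q := fun i =>
    ((hp.1 i).comp measurable_snd).mul hf.measurable
  have hb : ∀ i (q : Sq), |indP k hk i q.2 * f q| ≤ C := fun i q => by
    rw [abs_mul, abs_of_nonneg (hf.nonneg q)]
    exact (mul_le_of_le_one_left (hf.nonneg q) (hp.abs_le i _)).trans (hC q)
  refine ⟨fun i => ?_, fun i x => ?_, fun x => ?_, fun i => ?_⟩
  · exact ((hm i).stronglyMeasurable.integral_prod_right' (ν := volume)).measurable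
  · exact integral_nonneg fun v => mul_nonneg (hp.2.1 i v) (hf.nonneg _)
  · simp only [avgF]
    have hI : ∀ i, Integrable (fun v => indP k hk i v * f (x, v)) volume := fun i =>
      integ_bdd ((hm i).comp measurable_prodMk_left) C fun v => hb i (x, v)
    rw [← integral_finsetSum _ fun i _ => hI i]
    simp only [← Finset.sum_mul, hp.2.2.1, one_mul]
    exact hf.row x
  · simp only [avgF]
    rw [integral_integral_swap (integ_bdd (hm i) C (hb i))]
    simp only [integral_const_mul, hf.col, mul_one]
    exact hp.2.2.2 i

lemma PhiMeas_Jset {k : ℕ} (hk : 0 < k) {f : Sq → ℝ} (hf : FairlyDistributed f) (μ : Measure Sq)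
    [IsFiniteMeasure μ] (i j : Fin k) :
    (PhiMeas f μ).real (Jset k hk i ×ˢ Jset k hk j) =
      ∫ q, avgF k hk f i q.1 * avgF k hk f j q.2 ∂μ := by
  have hp := indP_frac k hk
  obtain ⟨C, hC⟩ := hf.bounded
  have hm0 : Measurable fun z : Sq × Sq => f (z.2.1, z.1.1) * f (z.2.2, z.1.2) := by
    have := hf.measurable
    fun_prop
  have hphi : Measurable (phiFn f μ) :=
    (hm0.stronglyMeasurable.integral_prod_right' (ν := μ)).measurable
  have hphi0 : ∀ u, 0 ≤ phiFn f μ u := fun u =>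
    integral_nonneg fun q => mul_nonneg (hf.nonneg _) (hf.nonneg _)
  rw [← integral_indP_prod, PhiMeas, integral_withDensity_eq_integral_toReal_smul
    hphi.ennreal_ofReal (Eventually.of_forall fun _ => ENNReal.ofReal_lt_top)]
  have hpi := hp.1 i
  have hpj := hp.1 j
  have hm : Measurable fun z : Sq × Sq => (f (z.2.1, z.1.1) * f (z.2.2, z.1.2)) *
      (indP k hk i z.1.1 * indP k hk j z.1.2) := by fun_prop
  have hb : ∀ z : Sq × Sq, |(f (z.2.1, z.1.1) * f (z.2.2, z.1.2)) *
      (indP k hk i z.1.1 * indP k hk j z.1.2)| ≤ C * C := by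
    intro z
    rw [abs_mul, abs_mul, abs_mul, abs_of_nonneg (hf.nonneg _), abs_of_nonneg (hf.nonneg _)]
    have h1 : |indP k hk i z.1.1| * |indP k hk j z.1.2| ≤ 1 :=
      mul_le_one₀ (hp.abs_le i _) (abs_nonneg _) (hp.abs_le j _)
    have h2 : f (z.2.1, z.1.1) * f (z.2.2, z.1.2) ≤ C * C :=
      mul_le_mul (hC _) (hC _) (hf.nonneg _) ((hf.nonneg _).trans (hC (z.2.1, z.1.1)))
    exact (mul_le_of_le_one_right (mul_nonneg (hf.nonneg _) (hf.nonneg _)) h1).trans h2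
  have e : ∀ u : Sq, (ENNReal.ofReal (phiFn f μ u)).toReal • (indP k hk i u.1 * indP k hk j u.2) =
      ∫ q, (f (q.1, u.1) * f (q.2, u.2)) * (indP k hk i u.1 * indP k hk j u.2) ∂μ := fun u => by
    rw [ENNReal.toReal_ofReal (hphi0 u), smul_eq_mul, phiFn, integral_mul_const]
  simp only [e]
  rw [integral_integral_swap (integ_bdd hm (C * C) hb)]
  congr 1
  funext q
  simp only [avgF]
  rw [← integral_prod_mul, Measure.volume_eq_prod]
  congr 1
  funext u
  ring

lemma shape_kShape {k : ℕ} (hk : 0 < k) (μ ν : SGraphon) {M : Matrix (Fin k) (Fin k) ℝ}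
    (hM : M ∈ Mstar k) (hν : ν.toMeasure = muM M) (hs : ν ∈ shape μ) :
    M ∈ kShape μ.toMeasure k := by
  have hprob : IsProbabilityMeasure μ.toMeasure := μ.1.2
  let G : SGraphon → Matrix (Fin k) (Fin k) ℝ := fun κ i j =>
    κ.toMeasure.real (Jset k hk i ×ˢ Jset k hk j)
  have hG : ContinuousAt G ν := by
    refine tendsto_pi_nhds.2 fun i => tendsto_pi_nhds.2 fun j => ?_
    have hfr : (ν.1 : Measure Sq) (frontier (Jset k hk i ×ˢ Jset k hk j)) = 0 := by
      have : (ν.1 : Measure Sq) = measW M (indP k hk) := by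
        rw [← muM_eq_measW]; exact hν
      rw [this]
      exact withDensity_absolutelyContinuous _ _ (frontier_Jset_prod k hk i j)
    have ht : Tendsto (fun κ : SGraphon => κ.1) (𝓝 ν) (𝓝 ν.1) :=
      continuous_subtype_val.tendsto _
    have := ProbabilityMeasure.tendsto_measure_of_null_frontier_of_tendsto' ht hfr
    exact (ENNReal.tendsto_toReal (measure_ne_top (ν.1 : Measure Sq) _)).comp this
  have h := hG.continuousWithinAt.mem_closure_image hs
  have hGM : G ν = M := by
    ext i j
    show ν.toMeasure.real _ = _
    rw [hν]
    exact muM_Jset hk hM i j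
  rw [hGM] at h
  refine closure_mono ?_ h
  rintro _ ⟨κ, ⟨f, hf, -, hκ⟩, rfl⟩
  refine ⟨avgF k hk f, avgF_frac hk hf, fun i j => ?_⟩
  show κ.toMeasure.real _ = _
  rw [hκ]
  exact PhiMeas_Jset hk hf _ i j

/-- Lemma `lem:shapes-b`. For every s-graphon `μ` and every `k ∈ ℕ`,
`C̃(μ,k) = C(μ) ∩ {μ_M : M ∈ M_k^*}`. -/
theorem stmt2 (μ : SGraphon) (k : ℕ) (hk : 0 < k) :
    kShapeTilde μ.toMeasure k =
      shape μ ∩ {ν : SGraphon | ∃ M ∈ Mstar k, ν.toMeasure = muM M} := by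
  apply Set.Subset.antisymm
  · rintro ν ⟨M, hM, hν⟩
    exact ⟨kShape_shape hk μ ν hM hν, M, kShape_sub μ hM, hν⟩
  · rintro ν ⟨hs, M, hM, hν⟩
    exact ⟨M, shape_kShape hk μ ν hM hν hs, hν⟩

end
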